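/- If posets X and Y are universally derived equivalent, then the opposite posets X^op and Y^op are universally derived equivalent. -/

import Mathlib

open CategoryTheory

universe u v w

/-- Two posets are universally derived equivalent if for every abelian category `A`,
the derived categories of diagram categories `D(A^P)` and `D(A^Q)` are equivalent
as triangulated categories. -/
def UniversallyDerivedEquivalent (P Q : Type*) [PartialOrder P] [PartialOrder Q] : Prop :=
  ∀ (A : Type u) (_ : Category.{v} A) (_ : Abelian A)
    (_ : HasDerivedCategory.{w} (P ⥤ A)) (_ : HasDerivedCategory.{w} (Q ⥤ A)),
    ∃ (e : DerivedCategory (P ⥤ A) ≌ DerivedCategory (Q ⥤ A))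
      (c : e.functor.CommShift ℤ), letI := c; e.functor.IsTriangulated

/-! Passing to opposite complexes preserves quasi-isomorphisms, so `K ↦ (n ↦ K.X (-n))` induces
an equivalence `D(B)ᵒᵖ ≌ D(Bᵒᵖ)`. It is triangulated because every distinguished triangle comes
from a degreewise split short complex, and the opposite of such a complex is degreewise split with
the opposite connecting morphism, without any sign. Since `A^{Xᵒᵖ}` is the opposite category of
`(Aᵒᵖ)^X`, this identifies `D(A^{Xᵒᵖ})ᵒᵖ` with `D((Aᵒᵖ)^X)`, and likewise for `Y`, so the
hypothesis for `Aᵒᵖ` gives the conclusion for `A`. -/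

universe u₁ v₁ u₂ v₂

open Limits Pretriangulated Opposite
open scoped CategoryTheory.Pretriangulated.Opposite

section TriangulatedEquivalence

/-- There is an equivalence of categories from `D₁` to `D₂` which is a triangulated functor. -/
def TriangulatedEquivalent (D₁ D₂ : Type*) [Category* D₁] [Category* D₂]
    [HasShift D₁ ℤ] [HasShift D₂ ℤ] [HasZeroObject D₁] [HasZeroObject D₂]
    [Preadditive D₁] [Preadditive D₂]
    [∀ n : ℤ, (shiftFunctor D₁ n).Additive] [∀ n : ℤ, (shiftFunctor D₂ n).Additive]
    [Pretriangulated D₁] [Pretriangulated D₂] : Prop :=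
  ∃ (e : D₁ ≌ D₂) (_ : e.functor.CommShift ℤ), e.functor.IsTriangulated

namespace TriangulatedEquivalent

variable {D₁ D₂ D₃ : Type*} [Category* D₁] [Category* D₂] [Category* D₃]
  [HasShift D₁ ℤ] [HasShift D₂ ℤ] [HasShift D₃ ℤ]
  [HasZeroObject D₁] [HasZeroObject D₂] [HasZeroObject D₃]
  [Preadditive D₁] [Preadditive D₂] [Preadditive D₃]
  [∀ n : ℤ, (shiftFunctor D₁ n).Additive] [∀ n : ℤ, (shiftFunctor D₂ n).Additive]
  [∀ n : ℤ, (shiftFunctor D₃ n).Additive]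
  [Pretriangulated D₁] [Pretriangulated D₂] [Pretriangulated D₃]

lemma of_isTriangulated (F : D₁ ⥤ D₂) [F.IsEquivalence] [F.CommShift ℤ] [F.IsTriangulated] :
    TriangulatedEquivalent D₁ D₂ :=
  ⟨F.asEquivalence, inferInstanceAs (F.CommShift ℤ), inferInstanceAs F.IsTriangulated⟩

lemma symm (h : TriangulatedEquivalent D₁ D₂) : TriangulatedEquivalent D₂ D₁ := by
  obtain ⟨e, _, he⟩ := h
  let := e.commShiftInverse ℤ
  have := e.commShift_of_functor ℤ
  have := Equivalence.IsTriangulated.mk' e he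
  exact of_isTriangulated e.inverse

lemma trans (h₁₂ : TriangulatedEquivalent D₁ D₂) (h₂₃ : TriangulatedEquivalent D₂ D₃) :
    TriangulatedEquivalent D₁ D₃ := by
  obtain ⟨e₁₂, _, _⟩ := h₁₂
  obtain ⟨e₂₃, _, _⟩ := h₂₃
  exact of_isTriangulated (e₁₂.functor ⋙ e₂₃.functor)

lemma op (h : TriangulatedEquivalent D₁ D₂) : TriangulatedEquivalent D₁ᵒᵖ D₂ᵒᵖ := by
  obtain ⟨e, _, _⟩ := h
  exact of_isTriangulated e.functor.op

variable (D₁) in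
lemma opOp : TriangulatedEquivalent D₁ᵒᵖᵒᵖ D₁ :=
  ⟨opOpEquivalence D₁, inferInstance, inferInstance⟩

lemma of_op (h : TriangulatedEquivalent D₁ᵒᵖ D₂ᵒᵖ) : TriangulatedEquivalent D₁ D₂ :=
  (opOp D₁).symm.trans (h.op.trans (opOp D₂))

end TriangulatedEquivalent

end TriangulatedEquivalence

section ExactEquivalence

variable {C D : Type*} [Category* C] [Category* D]

instance additive_of_isEquivalence [Preadditive C] [Preadditive D] [HasBinaryProducts C]
    (F : C ⥤ D) [F.IsEquivalence] : F.Additive :=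
  F.additive_of_preserves_binary_products

variable {ι : Type*} (c : ComplexShape ι)

instance isEquivalence_mapHomologicalComplex [HasZeroMorphisms C] [HasZeroMorphisms D]
    (F : C ⥤ D) [F.PreservesZeroMorphisms] [F.IsEquivalence] :
    (F.mapHomologicalComplex c).IsEquivalence :=
  (F.asEquivalence.mapHomologicalComplex c).isEquivalence_functor

variable [Abelian C] [Abelian D]

instance isEquivalence_mapHomologicalComplexUpToQuasiIsoLocalizerMorphism
    (F : C ⥤ D) [F.IsEquivalence] :
    (F.mapHomologicalComplexUpToQuasiIsoLocalizerMorphism c).functor.IsEquivalence :=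
  isEquivalence_mapHomologicalComplex c F

instance isInduced_mapHomologicalComplexUpToQuasiIsoLocalizerMorphism
    (F : C ⥤ D) [F.IsEquivalence] :
    (F.mapHomologicalComplexUpToQuasiIsoLocalizerMorphism c).IsInduced where
  inverseImage_eq := by
    ext K L f
    exact HomologicalComplex.quasiIso_map_iff_of_preservesHomology f F

lemma TriangulatedEquivalent.derivedCategory (E : C ≌ D) [HasDerivedCategory C]
    [HasDerivedCategory D] : TriangulatedEquivalent (DerivedCategory C) (DerivedCategory D) := by
  let F := E.functor
  let Φ := F.mapHomologicalComplexUpToQuasiIsoLocalizerMorphism (ComplexShape.up ℤ)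
  have := Φ.isLocalizedEquivalence_of_isInduced
  let : CatCommSq Φ.functor DerivedCategory.Q DerivedCategory.Q F.mapDerivedCategory :=
    ⟨F.mapDerivedCategoryFactors.symm⟩
  have : F.mapDerivedCategory.IsEquivalence :=
    Φ.isEquivalence DerivedCategory.Q DerivedCategory.Q F.mapDerivedCategory
  exact .of_isTriangulated F.mapDerivedCategory

end ExactEquivalence

section OppositeShift

lemma op_shiftFunctorAdd_hom_app {D : Type*} [Category* D] [HasShift D ℤ] (X : Dᵒᵖ) (a b : ℤ) :
    (shiftFunctorAdd Dᵒᵖ a b).hom.app X =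
      ((shiftFunctorAdd' D (-a) (-b) (-(a + b)) (by lia)).inv.app X.unop).op := by
  rw [← shiftFunctorAdd'_eq_shiftFunctorAdd, shiftFunctorAdd'_op_hom_app X a b _ rfl
    (-a) (-b) (-(a + b)) (by lia) (by lia) (by lia)]
  -- every `shiftFunctorOpIso` is an identity, so only the middle factor remains
  refine (Category.id_comp _).trans (.trans (_ ≫= ?_) (Category.comp_id _))
  exact (Category.id_comp _).trans (CategoryTheory.Functor.map_id _ _)

variable {C : Type*} [Category* C] [Preadditive C] (K : (CochainComplex C ℤ)ᵒᵖ)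

lemma op_shiftFunctorZero_hom_app_f (i : ℤ) :
    ((shiftFunctorZero (CochainComplex C ℤ)ᵒᵖ ℤ).hom.app K).unop.f i =
      (K.unop.XIsoOfEq (show i = i + -0 by lia)).hom := by
  rw [shiftFunctorZero_op_hom_app]
  exact (Category.comp_id _).trans (CochainComplex.shiftFunctorZero_inv_app_f K.unop i)

lemma op_shiftFunctorAdd_hom_app_f (a b i : ℤ) :
    ((shiftFunctorAdd (CochainComplex C ℤ)ᵒᵖ a b).hom.app K).unop.f i =
      (K.unop.XIsoOfEq (show i + -b + -a = i + -(a + b) by lia)).hom := by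
  rw [op_shiftFunctorAdd_hom_app]
  exact CochainComplex.shiftFunctorAdd'_inv_app_f' K.unop (-a) (-b) (-(a + b)) (by lia) i

end OppositeShift

/-- The functor sending (the opposite of) a cochain complex `K` to the cochain complex
in the opposite category which is `K.X (-n)` in degree `n`, with no sign in the differential. -/
noncomputable abbrev oppositeComplex (C : Type*) [Category* C] [Preadditive C] :
    (CochainComplex C ℤ)ᵒᵖ ⥤ CochainComplex Cᵒᵖ ℤ :=
  (CochainComplex.opEquivalence C).functor

namespace oppositeComplex

variable {C : Type*} [Category* C]

section Preadditive

variable [Preadditive C]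

lemma map_f {K L : (CochainComplex C ℤ)ᵒᵖ} (f : K ⟶ L) (i : ℤ) :
    ((oppositeComplex C).map f).f i = (f.unop.f (-i)).op := rfl

lemma XIsoOfEq_hom (K : (CochainComplex C ℤ)ᵒᵖ) {i j : ℤ} (h : i = j) :
    (((oppositeComplex C).obj K).XIsoOfEq h).hom =
      (K.unop.XIsoOfEq (show -j = -i by rw [h])).hom.op := by
  subst h
  rfl

/-- `oppositeComplex` commutes with the shift by `a`: both complexes are `K.X (-i - a)` in
degree `i`, and their differentials carry the same sign because `(-1) ^ a = (-1) ^ (-a)`. -/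
noncomputable def shiftIso (K : (CochainComplex C ℤ)ᵒᵖ) (a : ℤ) :
    (oppositeComplex C).obj (K⟦a⟧) ≅ ((oppositeComplex C).obj K)⟦a⟧ :=
  HomologicalComplex.Hom.isoOfComponents
    (fun i ↦ (K.unop.XIsoOfEq (show -(i + a) = -i + -a by lia)).op)
    (fun i j _ ↦ Quiver.Hom.unop_inj (by
      change (a.negOnePow • K.unop.d (-(j + a)) (-(i + a))) ≫
        (K.unop.XIsoOfEq (show -(i + a) = -i + -a by lia)).hom =
        (K.unop.XIsoOfEq (show -(j + a) = -j + -a by lia)).hom ≫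
          ((-a).negOnePow • K.unop.d (-j + -a) (-i + -a))
      simp))

noncomputable instance : (oppositeComplex C).CommShift ℤ where
  commShiftIso a := NatIso.ofComponents (fun K ↦ shiftIso K a) (fun f ↦ by
    ext i
    exact congrArg Quiver.Hom.op
      (HomologicalComplex.XIsoOfEq_hom_naturality f.unop (show -(i + a) = -i + -a by lia)).symm)
  commShiftIso_zero := by
    ext K i
    rw [Functor.CommShift.isoZero_hom_app, HomologicalComplex.comp_f,
      CochainComplex.shiftFunctorZero_inv_app_f, XIsoOfEq_hom, map_f,
      op_shiftFunctorZero_hom_app_f]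
    exact congrArg Quiver.Hom.op (K.unop.XIsoOfEq_hom_comp_XIsoOfEq_hom
      (show -(i + 0) = -i by lia) (show -i = -i + -0 by lia)).symm
  commShiftIso_add a b := by
    ext K i
    rw [Functor.CommShift.isoAdd_hom_app, HomologicalComplex.comp_f, HomologicalComplex.comp_f,
      HomologicalComplex.comp_f, CochainComplex.shiftFunctorAdd_inv_app_f, XIsoOfEq_hom, map_f,
      op_shiftFunctorAdd_hom_app_f]
    have XIsoOfEq_comp : (((K.unop.XIsoOfEq (show -(i + (a + b)) = -(i + b + a) by lia)).hom ≫
        (K.unop.XIsoOfEq (show _ = -(i + b) + -a by lia)).hom) ≫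
        (K.unop.XIsoOfEq (show _ = -i + -b + -a by lia)).hom) ≫
        (K.unop.XIsoOfEq (show _ = -i + -(a + b) by lia)).hom =
        (K.unop.XIsoOfEq (show _ = _ by lia)).hom := by
      simp only [HomologicalComplex.XIsoOfEq_hom_comp_XIsoOfEq_hom]
    exact congrArg Quiver.Hom.op XIsoOfEq_comp.symm

end Preadditive

section Abelian

variable [Abelian C]

lemma quasiIso_map_iff {K L : CochainComplex C ℤ} (f : K ⟶ L) :
    QuasiIso ((oppositeComplex C).map f.op) ↔ QuasiIso f := by
  have quasiIsoAt_map_iff (i : ℤ) :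
      QuasiIsoAt ((oppositeComplex C).map f.op) i ↔ QuasiIsoAt f (-i) := by
    rw [quasiIsoAt_iff' _ (i - 1) i (i + 1) (by simp) (by simp),
      quasiIsoAt_iff' _ (-(i + 1)) (-i) (-(i - 1)) (by simp; lia) (by simp; lia)]
    exact ShortComplex.quasiIso_opMap_iff
      ((HomologicalComplex.shortComplexFunctor' C _ (-(i + 1)) (-i) (-(i - 1))).map f)
  simp only [quasiIso_iff, quasiIsoAt_map_iff]
  exact (Equiv.neg ℤ).forall_congr_right (q := fun i ↦ QuasiIsoAt f i)

variable (C) in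
/-- `oppositeComplex C` as a morphism of localizers for the quasi-isomorphisms. -/
noncomputable def localizerMorphism :
    LocalizerMorphism (HomologicalComplex.quasiIso C (ComplexShape.up ℤ)).op
      (HomologicalComplex.quasiIso Cᵒᵖ (ComplexShape.up ℤ)) where
  functor := oppositeComplex C
  map _ _ f hf := (quasiIso_map_iff f.unop).2 hf

instance : (localizerMorphism C).functor.IsEquivalence :=
  inferInstanceAs (oppositeComplex C).IsEquivalence

instance : (localizerMorphism C).IsInduced where
  inverseImage_eq := by
    ext K L f
    exact quasiIso_map_iff f.unop

end Abelian

end oppositeComplex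

section DegreewiseSplit

open CochainComplex

variable {C : Type*} [Category* C] [Preadditive C]

lemma shiftFunctorCompIsoId_hom_app_f (K : CochainComplex C ℤ) (a b : ℤ) (hab : a + b = 0)
    (n : ℤ) :
    ((shiftFunctorCompIsoId (CochainComplex C ℤ) a b hab).hom.app K).f n =
      (K.XIsoOfEq (show n + b + a = n by lia)).hom := by
  have XIsoOfEq_comp : (K.XIsoOfEq (show n + b + a = n + 0 by lia)).hom ≫
      (K.XIsoOfEq (show n + 0 = n by lia)).hom = (K.XIsoOfEq (show n + b + a = n by lia)).hom :=
    K.XIsoOfEq_hom_comp_XIsoOfEq_hom _ _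
  rw [← XIsoOfEq_comp, ← shiftFunctorAdd'_inv_app_f' K a b 0 hab n, ← shiftFunctorZero_hom_app_f]
  rfl

lemma XIsoOfEq_hom_comp_shift {K L : CochainComplex C ℤ} {a : ℤ} (φ : K ⟶ L⟦a⟧) {p q r : ℤ}
    (hpq : p = q) (hqr : q + a = r) :
    (K.XIsoOfEq hpq).hom ≫ φ.f q ≫ (L.XIsoOfEq hqr).hom =
      φ.f p ≫ (L.XIsoOfEq (show p + a = r by rw [hpq, hqr])).hom := by
  subst hpq
  exact Category.id_comp _

variable (S : ShortComplex (CochainComplex C ℤ))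
  (σ : ∀ n, (S.map (HomologicalComplex.eval C _ n)).Splitting)

lemma homOfDegreewiseSplit_f_comp_XIsoOfEq_hom {p q : ℤ} (h : p + 1 = q) :
    (homOfDegreewiseSplit S σ).f p ≫ (S.X₁.XIsoOfEq h).hom =
      (σ p).s ≫ S.X₂.d p q ≫ (σ q).r := by
  subst h
  exact (Category.comp_id _).trans (homOfDegreewiseSplit_f S σ p)

namespace oppositeComplex

lemma mapTriangle_op_mor₃_f (T : Triangle (CochainComplex C ℤ)) (i : ℤ) :
    ((oppositeComplex C).mapTriangle.obj
      ((triangleOpEquivalence _).functor.obj (op T))).mor₃.f i =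
    (T.mor₃.f (-(i + 1)) ≫ (T.obj₁.XIsoOfEq (show -(i + 1) + 1 = -i by lia)).hom).op := by
  let γ := (shiftFunctorCompIsoId (CochainComplex C ℤ) (1 : ℤ) (-1) (by lia)).hom.app T.obj₁
  have counitIso_inv_app :
      (opShiftFunctorEquivalence (CochainComplex C ℤ) 1).counitIso.inv.app (op T.obj₁) = γ.op :=
    (opShiftFunctorEquivalence_counitIso_inv_app (op T.obj₁) 1 (-1) (by lia)).trans
      (Category.comp_id _)
  have mor₃_f_comp : (T.obj₃.XIsoOfEq (show -(i + 1) = -i + -1 by lia)).hom ≫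
        T.mor₃.f (-i + -1) ≫ γ.f (-i) =
      T.mor₃.f (-(i + 1)) ≫ (T.obj₁.XIsoOfEq (show -(i + 1) + 1 = -i by lia)).hom := by
    rw [shiftFunctorCompIsoId_hom_app_f]
    exact XIsoOfEq_hom_comp_shift T.mor₃ _ _
  rw [← mor₃_f_comp]
  change (((oppositeComplex C).map
    ((opShiftFunctorEquivalence (CochainComplex C ℤ) 1).counitIso.inv.app (op T.obj₁) ≫
      T.mor₃.op⟦(1 : ℤ)⟧')) ≫
        ((oppositeComplex C).commShiftIso (1 : ℤ)).hom.app (op T.obj₃)).f i = _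
  rw [counitIso_inv_app]
  rfl

/-- The degreewise splitting of the opposite of a degreewise split short complex. -/
def splittingOp (n : ℤ) :
    ((S.op.map (oppositeComplex C)).map (HomologicalComplex.eval Cᵒᵖ _ n)).Splitting :=
  (σ (-n)).op

lemma mapTriangle_op_triangleOfDegreewiseSplit_mor₃ :
    ((oppositeComplex C).mapTriangle.obj ((triangleOpEquivalence _).functor.obj
      (op (triangleOfDegreewiseSplit S σ)))).mor₃ =
    (triangleOfDegreewiseSplit (S.op.map (oppositeComplex C)) (splittingOp S σ)).mor₃ := by
  ext i
  have connecting_f : (homOfDegreewiseSplit S σ).f (-(i + 1)) ≫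
        (S.X₁.XIsoOfEq (show -(i + 1) + 1 = -i by lia)).hom =
      ((σ (-(i + 1))).s ≫ S.X₂.d (-(i + 1)) (-i)) ≫ (σ (-i)).r :=
    (homOfDegreewiseSplit_f_comp_XIsoOfEq_hom S σ _).trans (Category.assoc _ _ _).symm
  rw [mapTriangle_op_mor₃_f]
  exact (congrArg Quiver.Hom.op connecting_f).trans
    (homOfDegreewiseSplit_f (S.op.map (oppositeComplex C)) (splittingOp S σ) i).symm

/-- `oppositeComplex` sends the opposite of the triangle of a degreewise split short complex `S`
to the triangle of the opposite short complex: both connecting morphisms are `s ≫ d ≫ r`,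
where `s` and `r` are the sections and retractions of the splitting of `S`. -/
noncomputable def mapTriangleOfDegreewiseSplitIso :
    (oppositeComplex C).mapTriangle.obj ((triangleOpEquivalence _).functor.obj
      (op (triangleOfDegreewiseSplit S σ))) ≅
    triangleOfDegreewiseSplit (S.op.map (oppositeComplex C)) (splittingOp S σ) :=
  Triangle.isoMk _ _ (Iso.refl _) (Iso.refl _) (Iso.refl _)
    ((Category.comp_id _).trans (Category.id_comp _).symm)
    ((Category.comp_id _).trans (Category.id_comp _).symm)
    ((congrArg (_ ≫ ·) (CategoryTheory.Functor.map_id _ _)).trans ((Category.comp_id _).trans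
      ((mapTriangle_op_triangleOfDegreewiseSplit_mor₃ S σ).trans (Category.id_comp _).symm)))

end oppositeComplex

end DegreewiseSplit

section DerivedCategory

open DerivedCategory CochainComplex

variable {C : Type*} [Category* C] [Abelian C] [HasDerivedCategory C]

lemma mem_distTriang_iff_degreewiseSplit (T : Triangle (DerivedCategory C)) :
    T ∈ distTriang (DerivedCategory C) ↔
      ∃ (S : ShortComplex (CochainComplex C ℤ))
        (σ : ∀ n, (S.map (HomologicalComplex.eval C _ n)).Splitting),
        Nonempty (T ≅ Q.mapTriangle.obj (triangleOfDegreewiseSplit S σ)) := by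
  let e : (HomotopyCategory.quotient C (ComplexShape.up ℤ)).mapTriangle ⋙ Qh.mapTriangle ≅
      Q.mapTriangle :=
    (Functor.mapTriangleCompIso (HomotopyCategory.quotient C _) Qh).symm ≪≫
      Functor.mapTriangleIso (quotientCompQhIso C)
  constructor
  · rintro ⟨T', i, hT'⟩
    obtain ⟨S, σ, ⟨j⟩⟩ :=
      (HomotopyCategory.distinguished_iff_iso_trianglehOfDegreewiseSplit T').1 hT'
    exact ⟨S, σ, ⟨i ≪≫ Qh.mapTriangle.mapIso j ≪≫ e.app _⟩⟩
  · rintro ⟨S, σ, ⟨i⟩⟩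
    refine isomorphic_distinguished _ (Qh.map_distinguished _ ?_) _ (i ≪≫ e.symm.app _)
    exact (HomotopyCategory.distinguished_iff_iso_trianglehOfDegreewiseSplit _).2
      ⟨S, σ, ⟨Iso.refl _⟩⟩

variable (C) [HasDerivedCategory Cᵒᵖ]

namespace oppositeComplex

noncomputable instance : (localizerMorphism C).functor.CommShift ℤ :=
  inferInstanceAs ((oppositeComplex C).CommShift ℤ)

instance : (localizerMorphism C).IsLocalizedEquivalence :=
  (localizerMorphism C).isLocalizedEquivalence_of_isInduced

end oppositeComplex

open oppositeComplex

lemma TriangulatedEquivalent.derivedCategoryOp :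
    TriangulatedEquivalent (DerivedCategory C)ᵒᵖ (DerivedCategory Cᵒᵖ) := by
  let Φ := localizerMorphism C
  let L : (CochainComplex C ℤ)ᵒᵖ ⥤ (DerivedCategory C)ᵒᵖ := Q.op
  let G := Φ.localizedFunctor L Q
  have : G.IsEquivalence := Φ.isEquivalence L Q G
  let e : Φ.functor ⋙ Q ≅ L ⋙ G := CatCommSq.iso Φ.functor L Q G
  let : G.CommShift ℤ := Φ.commShift ℤ L Q G e
  have : NatTrans.CommShift e.hom ℤ := Φ.natTransCommShift_hom L Q G e
  suffices G.IsTriangulated from .of_isTriangulated G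
  constructor
  intro T hT
  obtain ⟨T', hT', ⟨i⟩⟩ := (mem_distTriang_op_iff' _).1 hT
  obtain ⟨S, σ, ⟨j⟩⟩ := (mem_distTriang_iff_degreewiseSplit _).1 hT'
  let Tₒₚ := (triangleOpEquivalence _).functor.obj (.op (triangleOfDegreewiseSplit S σ))
  have k : T ≅ L.mapTriangle.obj Tₒₚ :=
    i ≪≫ (triangleOpEquivalence _).functor.mapIso j.symm.op ≪≫
      Q.mapTriangleOpCompTriangleOpEquivalenceFunctorApp _
  exact (mem_distTriang_iff_degreewiseSplit _).2 ⟨_, splittingOp S σ,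
    ⟨G.mapTriangle.mapIso k ≪≫ (Functor.mapTriangleCompIso L G).symm.app Tₒₚ ≪≫
      (Functor.mapTriangleIso e).symm.app Tₒₚ ≪≫ (Functor.mapTriangleCompIso Φ.functor Q).app Tₒₚ ≪≫
      Q.mapTriangle.mapIso (mapTriangleOfDegreewiseSplitIso S σ)⟩⟩

end DerivedCategory

section Transport

/-- A localized equivalence allows a localization of its target to be used for its source. It is
used to produce the derived categories whose existence is not assumed. -/
@[reducible]
noncomputable def hasLocalizationOfIsLocalizedEquivalence {C₁ C₂ : Type u} [Category.{v} C₁]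
    [Category.{v} C₂] {W₁ : MorphismProperty C₁} {W₂ : MorphismProperty C₂}
    (Φ : LocalizerMorphism W₁ W₂) [Φ.IsLocalizedEquivalence]
    [MorphismProperty.HasLocalization.{w} W₂] : MorphismProperty.HasLocalization.{w} W₁ :=
  .mk (Φ.functor ⋙ W₂.Q')

variable {C D : Type u} [Category.{v} C] [Category.{v} D] [Abelian C] [Abelian D]

/-- The derived category of `D` realized as the derived category of an equivalent category. -/
@[reducible]
noncomputable def hasDerivedCategoryOfEquivalence (E : C ≌ D) [HasDerivedCategory.{w} C] :
    HasDerivedCategory.{w} D :=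
  let Φ := E.inverse.mapHomologicalComplexUpToQuasiIsoLocalizerMorphism (ComplexShape.up ℤ)
  have : Φ.IsLocalizedEquivalence := Φ.isLocalizedEquivalence_of_isInduced
  hasLocalizationOfIsLocalizedEquivalence Φ

variable (C) in
/-- The derived category of `Cᵒᵖ` realized as the opposite of the derived category of `C`. -/
@[reducible]
noncomputable def hasDerivedCategoryOp [HasDerivedCategory.{w} C] : HasDerivedCategory.{w} Cᵒᵖ :=
  have : MorphismProperty.HasLocalization.{w}
      (HomologicalComplex.quasiIso C (ComplexShape.up ℤ)).op :=
    .mk (HomologicalComplex.quasiIso C (ComplexShape.up ℤ)).Q'.op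
  let Φ := (oppositeComplex.localizerMorphism C).inv
  have : Φ.IsLocalizedEquivalence := Φ.isLocalizedEquivalence_of_isInduced
  hasLocalizationOfIsLocalizedEquivalence Φ

end Transport

/-- Contravariant `A`-valued diagrams are opposite to covariant `Aᵒᵖ`-valued ones:
`A^{Jᵒᵖ} ≃ ((Aᵒᵖ)^J)ᵒᵖ`, for any model `J'` of `Jᵒᵖ`. -/
def opDiagramEquivalence {J J' : Type*} [Category* J] [Category* J'] (e : J' ≌ Jᵒᵖ)
    (A : Type*) [Category* A] : (J' ⥤ A)ᵒᵖ ≌ J ⥤ Aᵒᵖ :=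
  e.congrLeft.op.trans (Functor.leftOpRightOpEquiv J A)

theorem stmt_11_general {J J' : Type u₁} {K K' : Type u₂} [Category.{v₁} J] [Category.{v₁} J']
    [Category.{v₂} K] [Category.{v₂} K'] (eJ : J' ≌ Jᵒᵖ) (eK : K' ≌ Kᵒᵖ)
    (A : Type u) [Category.{v} A] [Abelian A]
    [HasDerivedCategory.{w} (J' ⥤ A)] [HasDerivedCategory.{w} (K' ⥤ A)]
    (h : ∀ [HasDerivedCategory.{w} (J ⥤ Aᵒᵖ)] [HasDerivedCategory.{w} (K ⥤ Aᵒᵖ)],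
      TriangulatedEquivalent (DerivedCategory (J ⥤ Aᵒᵖ)) (DerivedCategory (K ⥤ Aᵒᵖ))) :
    TriangulatedEquivalent (DerivedCategory (J' ⥤ A)) (DerivedCategory (K' ⥤ A)) := by
  let := hasDerivedCategoryOp (J' ⥤ A)
  let := hasDerivedCategoryOp (K' ⥤ A)
  let := hasDerivedCategoryOfEquivalence (opDiagramEquivalence eJ A)
  let := hasDerivedCategoryOfEquivalence (opDiagramEquivalence eK A)
  have hJ := (TriangulatedEquivalent.derivedCategoryOp (J' ⥤ A)).trans
    (.derivedCategory (opDiagramEquivalence eJ A))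
  have hK := (TriangulatedEquivalent.derivedCategoryOp (K' ⥤ A)).trans
    (.derivedCategory (opDiagramEquivalence eK A))
  exact ((hJ.trans h).trans hK.symm).of_op

/-- Universal derived equivalence passes to opposite posets. -/
theorem stmt_11 (X Y : Type*) [PartialOrder X] [PartialOrder Y]
    (h : UniversallyDerivedEquivalent.{u, v, w} X Y) :
    UniversallyDerivedEquivalent.{u, v, w} Xᵒᵈ Yᵒᵈ := by
  intro A _ _ _ _
  exact stmt_11_general (orderDualEquivalence X) (orderDualEquivalence Y) A (h Aᵒᵖ _ _ _ _)
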